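/- Let d ≥ 1, α ∈ (0,2), T > 0, and let Ψ̃_T(u) = ∫_{|r| ≤ T^{−1/α}} (1 − cos(⟨u,r⟩)) |r|^{−(d+α)} dr. Then for every integer m ≥ 0 the integral ∫_{ℝ^d} |u|^m e^{−Ψ̃_T(u)} du is finite. -/

import Mathlib

/-!
Write `d` for the dimension. If `R * ‖u‖ ≥ 1`, the domain of integration contains a ball of radius
comparable to `‖u‖⁻¹` on which `⟪u, r⟫` stays in `[1/4, 3/4]`. There the integrand is at least a
constant times `‖u‖ ^ (d + α)`, while the ball has volume comparable to `‖u‖ ^ (-d)`. Hence the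
exponent grows at least like `‖u‖ ^ α`, and its exponential beats every polynomial.
-/

open MeasureTheory Metric
open scoped RealInnerProductSpace ENNReal

section Kernel

variable {E : Type*} [NormedAddCommGroup E] [InnerProductSpace ℝ E]

/-- The integrand of the Lévy–Khintchine exponent of an isotropic `α`-stable process in
dimension `d`: the jump `r` contributes `1 - cos ⟪u, r⟫`, weighted by the Lévy density
`‖r‖ ^ (-(d + α))`. -/
noncomputable def stableIntegrand (α : ℝ) (u r : E) : ℝ :=
  (1 - Real.cos ⟪u, r⟫) / ‖r‖ ^ ((Module.finrank ℝ E : ℝ) + α)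

/-- The Lévy–Khintchine exponent of an isotropic `α`-stable process whose jumps are truncated at
length `R`, with jumps measured against `μ`. -/
noncomputable def truncatedStableExponent [MeasurableSpace E] (μ : Measure E) (α R : ℝ) (u : E) :
    ℝ :=
  ∫ r in closedBall 0 R, stableIntegrand α u r ∂μ

lemma stableIntegrand_nonneg (α : ℝ) (u r : E) : 0 ≤ stableIntegrand α u r :=
  div_nonneg (sub_nonneg.2 (Real.cos_le_one _)) (by positivity)

lemma truncatedStableExponent_nonneg [MeasurableSpace E] (μ : Measure E) (α R : ℝ) (u : E) :
    0 ≤ truncatedStableExponent μ α R u :=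
  integral_nonneg fun r => stableIntegrand_nonneg α u r

lemma one_sub_cos_inner_le (u r : E) : 1 - Real.cos ⟪u, r⟫ ≤ ‖u‖ ^ 2 / 2 * ‖r‖ ^ 2 := by
  have inner_sq_le : ⟪u, r⟫ ^ 2 ≤ (‖u‖ * ‖r‖) ^ 2 :=
    sq_le_sq.2 ((abs_real_inner_le_norm u r).trans (le_abs_self _))
  linarith [Real.one_sub_sq_div_two_le_cos (x := ⟪u, r⟫), mul_pow ‖u‖ ‖r‖ 2]

lemma stableIntegrand_le (α : ℝ) (u r : E) :
    stableIntegrand α u r ≤ ‖u‖ ^ 2 / 2 * ‖r‖ ^ (-(Module.finrank ℝ E + α - 2)) := by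
  rcases eq_or_ne r 0 with rfl | hr
  · simp only [stableIntegrand, inner_zero_right, Real.cos_zero, sub_self, zero_div]
    positivity
  have hr_pos : 0 < ‖r‖ := norm_pos_iff.2 hr
  rw [stableIntegrand, div_le_iff₀ (by positivity), mul_assoc, ← Real.rpow_add hr_pos, neg_sub,
    sub_add_cancel, Real.rpow_two]
  exact one_sub_cos_inner_le u r

end Kernel

section DualBall

variable {E : Type*} [NormedAddCommGroup E] [InnerProductSpace ℝ E] {α R : ℝ} {u r : E}

/-- A ball of radius comparable to `‖u‖⁻¹`, placed in the direction of `u` so that `⟪u, r⟫` stays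
away from the zeros `0` and `2π` of `1 - cos`; it is `{0}` for `u = 0`. -/
def dualBall (u : E) : Set E :=
  closedBall ((2 * ‖u‖ ^ 2)⁻¹ • u) (4 * ‖u‖)⁻¹

lemma inner_mem_Icc_of_mem_dualBall (hu : u ≠ 0) (hr : r ∈ dualBall u) :
    ⟪u, r⟫ ∈ Set.Icc (1 / 4) (3 / 4) := by
  have : 0 < ‖u‖ := norm_pos_iff.2 hu
  set a : E := (2 * ‖u‖ ^ 2)⁻¹ • u with ha
  have inner_center : ⟪u, a⟫ = 1 / 2 := by
    rw [ha, inner_smul_right, real_inner_self_eq_norm_sq]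
    field_simp
  have inner_offset : |⟪u, r⟫ - 1 / 2| ≤ 1 / 4 :=
    calc |⟪u, r⟫ - 1 / 2| = |⟪u, r - a⟫| := by rw [inner_sub_right, inner_center]
      _ ≤ ‖u‖ * ‖r - a‖ := abs_real_inner_le_norm u (r - a)
      _ ≤ ‖u‖ * (4 * ‖u‖)⁻¹ := by gcongr; exact mem_closedBall_iff_norm.1 hr
      _ = 1 / 4 := by field_simp
  obtain ⟨lower, upper⟩ := abs_le.1 inner_offset
  constructor <;> linarith

lemma norm_mul_norm_le_one_of_mem_dualBall (hr : r ∈ dualBall u) : ‖u‖ * ‖r‖ ≤ 1 := by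
  rcases eq_or_ne u 0 with rfl | hu
  · simp
  have : 0 < ‖u‖ := norm_pos_iff.2 hu
  calc ‖u‖ * ‖r‖ ≤ ‖u‖ * (‖(2 * ‖u‖ ^ 2)⁻¹ • u‖ + (4 * ‖u‖)⁻¹) := by
        gcongr; exact norm_le_of_mem_closedBall hr
    _ = 3 / 4 := by
        rw [norm_smul, Real.norm_of_nonneg (by positivity)]
        field_simp
        norm_num
    _ ≤ 1 := by norm_num

lemma dualBall_subset_closedBall (hR : 1 ≤ R * ‖u‖) : dualBall u ⊆ closedBall 0 R := by
  intro r hr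
  have hu_pos : 0 < ‖u‖ := (norm_nonneg u).lt_of_ne' (by rintro h; norm_num [h] at hR)
  rw [mem_closedBall_zero_iff]
  refine le_of_mul_le_mul_right ?_ hu_pos
  linarith [norm_mul_norm_le_one_of_mem_dualBall hr]

lemma le_stableIntegrand_of_mem_dualBall (hα : 0 ≤ Module.finrank ℝ E + α) (hu : u ≠ 0)
    (hr : r ∈ dualBall u) :
    2 / Real.pi ^ 2 * (1 / 4) ^ 2 * ‖u‖ ^ (Module.finrank ℝ E + α) ≤ stableIntegrand α u r := by
  obtain ⟨inner_ge, inner_le⟩ := inner_mem_Icc_of_mem_dualBall hu hr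
  have hr_pos : 0 < ‖r‖ := norm_pos_iff.2 fun h => by norm_num [h] at inner_ge
  have one_sub_cos_ge : 2 / Real.pi ^ 2 * (1 / 4) ^ 2 ≤ 1 - Real.cos ⟪u, r⟫ :=
    calc 2 / Real.pi ^ 2 * (1 / 4) ^ 2 ≤ 2 / Real.pi ^ 2 * ⟪u, r⟫ ^ 2 := by gcongr
      _ ≤ 1 - Real.cos ⟪u, r⟫ := by
        have := Real.cos_le_one_sub_mul_cos_sq (x := ⟪u, r⟫)
          (abs_le.2 (by constructor <;> linarith [Real.pi_gt_three]))
        linarith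
  rw [stableIntegrand, le_div_iff₀ (by positivity), mul_assoc,
    ← Real.mul_rpow (norm_nonneg u) (norm_nonneg r)]
  exact (mul_le_of_le_one_right (by positivity) (Real.rpow_le_one (by positivity)
    (norm_mul_norm_le_one_of_mem_dualBall hr) hα)).trans one_sub_cos_ge

end DualBall

section Exponent

variable {E : Type*} [NormedAddCommGroup E] [InnerProductSpace ℝ E] [FiniteDimensional ℝ E]
  [MeasurableSpace E] [BorelSpace E] {α R : ℝ}

lemma measurable_stableIntegrand (α : ℝ) :
    Measurable fun p : E × E => stableIntegrand α p.1 p.2 := by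
  unfold stableIntegrand
  fun_prop

lemma measurable_truncatedStableExponent (μ : Measure E) [SFinite μ] (α R : ℝ) :
    Measurable (truncatedStableExponent μ α R) :=
  (measurable_stableIntegrand α).stronglyMeasurable.integral_prod_right'.measurable

variable (μ : Measure E) [μ.IsAddHaarMeasure]

lemma addHaar_real_dualBall (u : E) :
    μ.real (dualBall u) =
      (1 / 4) ^ Module.finrank ℝ E / ‖u‖ ^ Module.finrank ℝ E * μ.real (ball 0 1) := by
  rw [dualBall, Measure.addHaar_real_closedBall _ _ (by positivity), ← one_div, ← div_div, div_pow]

variable [Nontrivial E]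

lemma locallyIntegrable_stableIntegrand (hα : α < 2) (u : E) :
    LocallyIntegrable (stableIntegrand α u) μ :=
  locallyIntegrable_of_norm_le_rpow (Module.finrank_pos (R := ℝ))
    (show Module.finrank ℝ E + α - 2 < Module.finrank ℝ E by linarith)
    (.of_forall fun r =>
      (Real.norm_of_nonneg (stableIntegrand_nonneg α u r)).trans_le (stableIntegrand_le α u r))
    ((measurable_stableIntegrand α).of_uncurry_left).aestronglyMeasurable

lemma exists_mul_norm_rpow_le_truncatedStableExponent (hα : 0 ≤ Module.finrank ℝ E + α)
    (hα2 : α < 2) : ∃ c > 0, ∀ (R : ℝ) (u : E), 1 ≤ R * ‖u‖ →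
      c * ‖u‖ ^ α ≤ truncatedStableExponent μ α R u := by
  set κ : ℝ := 2 / Real.pi ^ 2 * (1 / 4) ^ 2
  have unitBall_pos : 0 < μ.real (ball 0 1) :=
    ENNReal.toReal_pos (measure_ball_pos _ _ one_pos).ne' measure_ball_lt_top.ne
  refine ⟨κ * (1 / 4) ^ Module.finrank ℝ E * μ.real (ball 0 1), by positivity, fun R u hR => ?_⟩
  have hu : u ≠ 0 := by rintro rfl; norm_num at hR
  have hu_pos : 0 < ‖u‖ := norm_pos_iff.2 hu
  have integrableOn_closedBall : IntegrableOn (stableIntegrand α u) (closedBall 0 R) μ :=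
    (locallyIntegrable_stableIntegrand μ hα2 u).integrableOn_isCompact (isCompact_closedBall 0 R)
  calc κ * (1 / 4) ^ Module.finrank ℝ E * μ.real (ball 0 1) * ‖u‖ ^ α
      = κ * ‖u‖ ^ (Module.finrank ℝ E + α) * μ.real (dualBall u) := by
        rw [addHaar_real_dualBall, Real.rpow_add hu_pos, Real.rpow_natCast]
        field_simp
    _ ≤ ∫ r in dualBall u, stableIntegrand α u r ∂μ :=
        setIntegral_ge_of_const_le_real measurableSet_closedBall measure_closedBall_lt_top.ne
          (fun _ hr => le_stableIntegrand_of_mem_dualBall hα hu hr)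
          (integrableOn_closedBall.mono_set (dualBall_subset_closedBall hR))
    _ ≤ truncatedStableExponent μ α R u :=
        setIntegral_mono_set integrableOn_closedBall (.of_forall (stableIntegrand_nonneg α u))
          (dualBall_subset_closedBall hR).eventuallyLE

lemma exists_mul_norm_rpow_sub_le_truncatedStableExponent (hα : 0 ≤ α) (hα2 : α < 2)
    (hR : 0 < R) :
    ∃ c > 0, ∃ C, ∀ u : E, c * ‖u‖ ^ α - C ≤ truncatedStableExponent μ α R u := by
  obtain ⟨c, hc, growth⟩ :=
    exists_mul_norm_rpow_le_truncatedStableExponent μ (by positivity) hα2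
  refine ⟨c, hc, c * R⁻¹ ^ α, fun u => ?_⟩
  rcases le_total 1 (R * ‖u‖) with large | small
  · have : 0 ≤ c * R⁻¹ ^ α := by positivity
    linarith [growth R u large]
  · have norm_le : ‖u‖ ≤ R⁻¹ := (le_inv_mul_iff₀ hR).2 small |>.trans_eq (mul_one _)
    have : c * ‖u‖ ^ α ≤ c * R⁻¹ ^ α := by gcongr
    linarith [truncatedStableExponent_nonneg μ α R u]

end Exponent

lemma integrable_norm_rpow_mul_exp_neg_mul_norm_rpow {E : Type*} [NormedAddCommGroup E]
    [NormedSpace ℝ E] [FiniteDimensional ℝ E] [Nontrivial E] [MeasurableSpace E] [BorelSpace E]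
    (μ : Measure E) [μ.IsAddHaarMeasure] {s p b : ℝ} (hs : -(Module.finrank ℝ E : ℝ) < s)
    (hp : 0 < p) (hb : 0 < b) :
    Integrable (fun x : E => ‖x‖ ^ s * Real.exp (-b * ‖x‖ ^ p)) μ := by
  rw [integrable_fun_norm_addHaar μ (f := fun y : ℝ => y ^ s * Real.exp (-b * y ^ p))]
  refine (integrableOn_rpow_mul_exp_neg_mul_rpow (s := Module.finrank ℝ E - 1 + s)
    (by linarith) hp hb).congr_fun (fun y hy => ?_) measurableSet_Ioi
  have one_le_finrank : 1 ≤ Module.finrank ℝ E := Module.finrank_pos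
  simp only [smul_eq_mul]
  rw [Real.rpow_add hy, ← Real.rpow_natCast, Nat.cast_sub one_le_finrank, Nat.cast_one, mul_assoc]

theorem stmt_2_general {E : Type*} [NormedAddCommGroup E] [InnerProductSpace ℝ E]
    [FiniteDimensional ℝ E] [Nontrivial E] [MeasurableSpace E] [BorelSpace E]
    (μ : Measure E) [μ.IsAddHaarMeasure] {α R s : ℝ} (hα : 0 < α) (hα2 : α < 2) (hR : 0 < R)
    (hs : -(Module.finrank ℝ E : ℝ) < s) :
    Integrable (fun u => ‖u‖ ^ s * Real.exp (-truncatedStableExponent μ α R u)) μ := by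
  obtain ⟨c, hc, C, growth⟩ :=
    exists_mul_norm_rpow_sub_le_truncatedStableExponent μ hα.le hα2 hR
  have hΨ := measurable_truncatedStableExponent μ α R
  refine ((integrable_norm_rpow_mul_exp_neg_mul_norm_rpow μ hs hα hc).const_mul
    (Real.exp C)).mono' (by fun_prop) (.of_forall fun u => ?_)
  rw [Real.norm_of_nonneg (by positivity)]
  calc ‖u‖ ^ s * Real.exp (-truncatedStableExponent μ α R u)
      ≤ ‖u‖ ^ s * Real.exp (C + -c * ‖u‖ ^ α) := by
        gcongr
        linarith [growth u]
    _ = Real.exp C * (‖u‖ ^ s * Real.exp (-c * ‖u‖ ^ α)) := by rw [Real.exp_add]; ring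

/-- All polynomial moments against `e^{-Ψ̃_T}` are finite. -/
theorem stmt_2 (d : ℕ) (hd : 1 ≤ d) (α : ℝ) (hα : 0 < α) (hα2 : α < 2)
    (T : ℝ) (hT : 0 < T)
    (Ψt : EuclideanSpace ℝ (Fin d) → ℝ)
    (hΨt : ∀ u, Ψt u =
      ∫ r in Metric.closedBall (0 : EuclideanSpace ℝ (Fin d)) (T ^ (-(1 / α))),
        (1 - Real.cos ⟪u, r⟫) / ‖r‖ ^ ((d : ℝ) + α)) :
    ∀ m : ℕ,
      ∫⁻ u : EuclideanSpace ℝ (Fin d),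
        ENNReal.ofReal (‖u‖ ^ m * Real.exp (-Ψt u)) < ⊤ := by
  intro m
  have : Nonempty (Fin d) := ⟨⟨0, hd⟩⟩
  have hΨ : Ψt = truncatedStableExponent volume α (T ^ (-(1 / α))) := by
    ext u
    simp only [hΨt, truncatedStableExponent, stableIntegrand, finrank_euclideanSpace_fin]
  have hm : -(Module.finrank ℝ (EuclideanSpace ℝ (Fin d)) : ℝ) < m := by
    rw [finrank_euclideanSpace_fin]
    exact_mod_cast (by lia : -(d : ℤ) < m)
  simpa only [hΨ, Real.rpow_natCast] using
    (stmt_2_general volume hα hα2 (Real.rpow_pos_of_pos hT _) hm).lintegral_lt_top
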